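/- (Theorem 1, monotonicity of the Q function with respect to AoI states.) Suppose V is AoI-antitone. Then for every feasible action a, every state s = (τ, H), every device index n, and every τ'_n ≥ τ_n, letting s'_AoI = (τ'_(n), H) where τ'_(n) = (τ_1, …, τ'_n, …, τ_N) agrees with τ in all coordinates except the n-th, one has Q(s'_AoI, a) ≤ Q(s, a). -/

import Mathlib

/-- AoI (Age-of-Information) state vector: each device's AoI is a positive natural. -/
abbrev AoI (N : ℕ) := Fin N → ℕ+

/-- Channel state matrix: entry `(n, m)` is the (quantized) state of the channel
between device `n` and the destination on sub-channel `m`, one of `ĥ` levels. -/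
abbrev Chan (N M hh : ℕ) := Fin N → Fin M → Fin hh

/-- A state of the MDP: a pair `s = (τ, H)`. -/
abbrev MDPState (N M hh : ℕ) := AoI N × Chan N M hh

/-- An action: `a n = some m` means device `n` transmits on channel `m`;
`a n = none` means device `n` is idle (`a_n = 0`). A device uses at most
one channel automatically since `a` is a function. -/
abbrev SchedAction (N M : ℕ) := Fin N → Option (Fin M)

/-- Feasibility: every channel `m` is used by exactly one device. -/
def Feasible {N M : ℕ} (a : SchedAction N M) : Prop :=
  ∀ m : Fin M, ∃! n : Fin N, a n = some m

/-- Probability that device `n`'s AoI transition is the one encoded by the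
success flags `b` (`b n = true` iff device `n`'s packet is received):
if `a n = some m`, success has probability `1 - p n m (H n m)` and failure
probability `p n m (H n m)`; an idle device surely fails. -/
def devProb {N M hh : ℕ} (p : Fin N → Fin M → Fin hh → ℝ)
    (H : Chan N M hh) (a : SchedAction N M) (b : Fin N → Bool) (n : Fin N) : ℝ :=
  match a n with
  | some m => if b n then 1 - p n m (H n m) else p n m (H n m)
  | none => if b n then 0 else 1

/-- The next AoI vector: `1` upon reception, `τ n + 1` otherwise. -/
def nextAoI {N : ℕ} (τ : AoI N) (b : Fin N → Bool) : AoI N :=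
  fun n => if b n then 1 else τ n + 1

/-- The expected next-state value `∑_{s⁺} P(s⁺ | s, a) V(s⁺)`, where
`P((τ⁺,H⁺) | (τ,H), a) = (∏_n Pr(τ_n⁺ | τ_n, H, a_n)) · q(H⁺)`. -/
noncomputable def expNext {N M hh : ℕ} (p : Fin N → Fin M → Fin hh → ℝ)
    (q : Chan N M hh → ℝ) (V : MDPState N M hh → ℝ)
    (s : MDPState N M hh) (a : SchedAction N M) : ℝ :=
  ∑ Hp : Chan N M hh, ∑ b : Fin N → Bool,
    q Hp * (∏ n, devProb p s.2 a b n) * V (nextAoI s.1 b, Hp)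

/-- `Q(s,a) = r(s) + γ ∑_{s⁺} P(s⁺ | s, a) V(s⁺)` with reward
`r(s) = -∑_n g_n(τ_n)`. -/
noncomputable def Qval {N M hh : ℕ} (p : Fin N → Fin M → Fin hh → ℝ)
    (q : Chan N M hh → ℝ) (g : Fin N → ℕ+ → ℝ) (γ : ℝ)
    (V : MDPState N M hh → ℝ) (s : MDPState N M hh) (a : SchedAction N M) : ℝ :=
  (- ∑ n, g n (s.1 n)) + γ * expNext p q V s a

/-- `V` is AoI-antitone: increasing a single AoI coordinate (keeping everything
else fixed) cannot increase the value. -/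
def AoIAntitone {N M hh : ℕ} (V : MDPState N M hh → ℝ) : Prop :=
  ∀ (n : Fin N) (H : Chan N M hh) (τ τ' : AoI N),
    (∀ k, k ≠ n → τ' k = τ k) → τ n ≤ τ' n → V (τ', H) ≤ V (τ, H)

/-!
Since AoI vectors take values in a locally finite order, being antitone in each coordinate is the
same as being antitone for the product order. The randomness `(b, H⁺)` of a transition does not
depend on the current AoI vector `τ`, so two AoI vectors can be driven by the same success flags
and channel matrix; this coupling preserves their order, and the expected next-state value
inherits antitonicity from `V` summand by summand.
-/

section

variable {N M hh : ℕ} {p : Fin N → Fin M → Fin hh → ℝ} {q : Chan N M hh → ℝ}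
  {V : MDPState N M hh → ℝ}

theorem AoIAntitone.antitone (hV : AoIAntitone V) (H : Chan N M hh) :
    Antitone fun τ : AoI N ↦ V (τ, H) := by
  -- A covering relation in a product of orders changes exactly one coordinate.
  refine (antitone_iff_forall_covBy _).2 fun τ τ' hcov ↦ ?_
  obtain ⟨n, hn, hagree⟩ := Pi.covBy_iff.1 hcov
  exact hV n H τ τ' (fun k hk ↦ (hagree k hk).symm) hn.le

theorem nextAoI_mono (b : Fin N → Bool) : Monotone fun τ : AoI N ↦ nextAoI τ b := by
  intro τ τ' hτ n
  dsimp only [nextAoI]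
  split_ifs
  · exact le_rfl
  · exact add_le_add_left (hτ n) 1

theorem devProb_nonneg (hp0 : ∀ n m h, 0 ≤ p n m h) (hp1 : ∀ n m h, p n m h ≤ 1)
    (H : Chan N M hh) (a : SchedAction N M) (b : Fin N → Bool) (n : Fin N) :
    0 ≤ devProb p H a b n := by
  unfold devProb
  split <;> split_ifs
  · exact sub_nonneg.2 (hp1 _ _ _)
  · exact hp0 _ _ _
  · exact le_rfl
  · exact zero_le_one

theorem expNext_antitone (hp0 : ∀ n m h, 0 ≤ p n m h) (hp1 : ∀ n m h, p n m h ≤ 1)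
    (hq0 : ∀ H, 0 ≤ q H) (hV : AoIAntitone V) (H : Chan N M hh) (a : SchedAction N M) :
    Antitone fun τ : AoI N ↦ expNext p q V (τ, H) a := by
  refine fun τ τ' hτ ↦ Finset.sum_le_sum fun Hp _ ↦ Finset.sum_le_sum fun b _ ↦ ?_
  have hweight : 0 ≤ q Hp * ∏ n, devProb p H a b n :=
    mul_nonneg (hq0 Hp) (Finset.prod_nonneg fun n _ ↦ devProb_nonneg hp0 hp1 H a b n)
  exact mul_le_mul_of_nonneg_left (hV.antitone Hp (nextAoI_mono b hτ)) hweight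

theorem q_antitone_in_aoi_general (hp0 : ∀ n m h, 0 ≤ p n m h) (hp1 : ∀ n m h, p n m h ≤ 1)
    (hq0 : ∀ H, 0 ≤ q H) {g : Fin N → ℕ+ → ℝ} (hgmono : ∀ n, Monotone (g n))
    {γ : ℝ} (hγ0 : 0 ≤ γ) (hV : AoIAntitone V) (a : SchedAction N M) (H : Chan N M hh) :
    Antitone fun τ : AoI N ↦ Qval p q g γ V (τ, H) a := by
  intro τ τ' hτ
  have hcost : ∑ n, g n (τ n) ≤ ∑ n, g n (τ' n) :=
    Finset.sum_le_sum fun n _ ↦ hgmono n (hτ n)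
  have hnext : expNext p q V (τ', H) a ≤ expNext p q V (τ, H) a :=
    expNext_antitone hp0 hp1 hq0 hV H a hτ
  exact add_le_add (neg_le_neg hcost) (mul_le_mul_of_nonneg_left hnext hγ0)

end

/-- **Theorem 1** (monotonicity of the Q function w.r.t. AoI states).
If `V` is AoI-antitone, then for any feasible action `a`, any state `s = (τ, H)`,
any device `n` and any `τ'` agreeing with `τ` except `τ' n ≥ τ n`,
`Q((τ', H), a) ≤ Q((τ, H), a)`. -/
theorem q_antitone_in_aoi
    (N M hh : ℕ) (hMN : M < N)
    (p : Fin N → Fin M → Fin hh → ℝ)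
    (hp0 : ∀ n m h, 0 ≤ p n m h) (hp1 : ∀ n m h, p n m h ≤ 1)
    (hpmono : ∀ n m, Monotone (p n m))
    (q : Chan N M hh → ℝ) (hq0 : ∀ H, 0 ≤ q H) (hq1 : ∑ H : Chan N M hh, q H = 1)
    (g : Fin N → ℕ+ → ℝ) (hgpos : ∀ n τ, 0 < g n τ) (hgmono : ∀ n, Monotone (g n))
    (γ : ℝ) (hγ0 : 0 < γ) (hγ1 : γ < 1)
    (V : MDPState N M hh → ℝ) (hV : AoIAntitone V)
    (a : SchedAction N M) (ha : Feasible a)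
    (τ τ' : AoI N) (H : Chan N M hh) (n : Fin N)
    (hagree : ∀ k, k ≠ n → τ' k = τ k) (hτ : τ n ≤ τ' n) :
    Qval p q g γ V (τ', H) a ≤ Qval p q g γ V (τ, H) a := by
  have hle : τ ≤ τ' := fun k ↦ if hk : k = n then hk ▸ hτ else (hagree k hk).ge
  exact q_antitone_in_aoi_general hp0 hp1 hq0 hgmono hγ0.le hV a H hle
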